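/- There is a constant C depending only on m and n such that Γ̃₀' ⊆ Γ'*(0,C); that is, if P is a polynomial of degree at most m−1 on ℝⁿ with |∂^β P(0)| ≤ 1 for |β| ≤ m−1 and P(x) + |x|^m ≥ 0 for all x ∈ ℝⁿ, then there exists F ∈ C^{m-1,1}(ℝⁿ) with ‖F‖_{C^{m-1,1}(ℝⁿ)} ≤ C, F ≥ 0 on ℝⁿ, and J₀(F) = P. -/

import Mathlib

open scoped BigOperators

noncomputable section

abbrev Euc (n : ℕ) : Type := EuclideanSpace ℝ (Fin n)
abbrev MPoly (n : ℕ) : Type := MvPolynomial (Fin n) ℝ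

/-- Partial derivative in the `i`-th coordinate direction. -/
noncomputable def pD {n : ℕ} (i : Fin n) (F : Euc n → ℝ) : Euc n → ℝ :=
  fun x => fderiv ℝ F x (EuclideanSpace.single i (1 : ℝ))

/-- The multi-index partial derivative `∂^α F`. -/
noncomputable def mD {n : ℕ} (α : Fin n → ℕ) (F : Euc n → ℝ) : Euc n → ℝ :=
  (((List.finRange n).flatMap fun i => List.replicate (α i) i)).foldr pD F

/-- Partial derivative within a set. -/
noncomputable def pDW {n : ℕ} (s : Set (Euc n)) (i : Fin n) (F : Euc n → ℝ) : Euc n → ℝ :=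
  fun x => fderivWithin ℝ F s x (EuclideanSpace.single i (1 : ℝ))

/-- Multi-index partial derivative within a set. -/
noncomputable def mDW {n : ℕ} (s : Set (Euc n)) (α : Fin n → ℕ) (F : Euc n → ℝ) : Euc n → ℝ :=
  (((List.finRange n).flatMap fun i => List.replicate (α i) i)).foldr (pDW s) F

/-- The order `|α|` of a multi-index. -/
def deg {n : ℕ} (α : Fin n → ℕ) : ℕ := ∑ i, α i

/-- Evaluation of an `n`-variable polynomial at a point of `ℝⁿ`. -/
noncomputable def peval {n : ℕ} (P : MPoly n) (x : Euc n) : ℝ :=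
  MvPolynomial.eval (fun i => x i) P

/-- `F ∈ C^m(ℝⁿ)` with `‖F‖_{C^m(ℝⁿ)} ≤ M`. -/
def CmNormLe (m n : ℕ) (F : Euc n → ℝ) (M : ℝ) : Prop :=
  ContDiff ℝ (m : ℕ∞) F ∧ ∀ α : Fin n → ℕ, deg α ≤ m → ∀ x : Euc n, |mD α F x| ≤ M

/-- `F ∈ C^{m-1,1}(ℝⁿ)` with `‖F‖_{C^{m-1,1}(ℝⁿ)} ≤ M`. -/
def CmLipNormLe (m n : ℕ) (F : Euc n → ℝ) (M : ℝ) : Prop :=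
  ContDiff ℝ ((m - 1 : ℕ) : ℕ∞) F ∧
  (∀ α : Fin n → ℕ, deg α ≤ m - 1 → ∀ x : Euc n, |mD α F x| ≤ M) ∧
  (∀ α : Fin n → ℕ, deg α = m - 1 → ∀ i : Fin n, ∀ x : Euc n, ∀ t : ℝ,
    |mD α F (x + t • EuclideanSpace.single i (1 : ℝ)) - mD α F x| ≤ M * |t|)

/-- `J_x(F) = P`, i.e. `P` is the `(m-1)`-st order Taylor polynomial of `F` at `x`. -/
def IsJetAt (m n : ℕ) (F : Euc n → ℝ) (x : Euc n) (P : MPoly n) : Prop :=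
  P.totalDegree ≤ m - 1 ∧
  ∀ α : Fin n → ℕ, deg α ≤ m - 1 → mD α (peval P) x = mD α F x

/-- `J_x^+(F) = P`, i.e. `P` is the `m`-th order Taylor polynomial of `F` at `x`. -/
def IsJetPlusAt (m n : ℕ) (F : Euc n → ℝ) (x : Euc n) (P : MPoly n) : Prop :=
  P.totalDegree ≤ m ∧
  ∀ α : Fin n → ℕ, deg α ≤ m → mD α (peval P) x = mD α F x

/-- Truncation of a polynomial: keep the monomials of total degree `≤ d`. -/
noncomputable def truncLE {n : ℕ} (d : ℕ) (P : MPoly n) : MPoly n :=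
  ∑ s ∈ P.support.filter (fun s => (s.sum fun _ e => e) ≤ d),
    MvPolynomial.monomial s (P.coeff s)

/-- Substitution `y ↦ y + v` in a polynomial. -/
noncomputable def polyShift {n : ℕ} (v : Fin n → ℝ) (P : MPoly n) : MPoly n :=
  MvPolynomial.aeval (fun i => (MvPolynomial.X i + MvPolynomial.C (v i) : MPoly n)) P

/-- The `(m-1)`-st order Taylor polynomial of a polynomial `P` at `x`. -/
noncomputable def jetTrunc (m n : ℕ) (x : Euc n) (P : MPoly n) : MPoly n :=
  polyShift (fun i => -(x i)) (truncLE (m - 1) (polyShift (fun i => x i) P))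

/-- Multiplication of `(m-1)`-jets at `x`: `P ⊙_x Q = J_x(PQ)`. -/
noncomputable def jmul (m n : ℕ) (x : Euc n) (P Q : MPoly n) : MPoly n :=
  jetTrunc m n x (P * Q)

/-- `Γ*(x,M)`. -/
def GammaStar (m n : ℕ) (x : Euc n) (M : ℝ) : Set (MPoly n) :=
  {P | ∃ F : Euc n → ℝ, CmNormLe m n F M ∧ (∀ y, 0 ≤ F y) ∧ IsJetAt m n F x P}

/-- `Γ_f(x,M)`. -/
def GammaF (m n : ℕ) (f : Euc n → ℝ) (x : Euc n) (M : ℝ) : Set (MPoly n) :=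
  {P ∈ GammaStar m n x M | peval P x = f x}

/-- `Γ'*(x,M)` (the `C^{m-1,1}` version). -/
def GammaStar' (m n : ℕ) (x : Euc n) (M : ℝ) : Set (MPoly n) :=
  {P | ∃ F : Euc n → ℝ, CmLipNormLe m n F M ∧ (∀ y, 0 ≤ F y) ∧ IsJetAt m n F x P}

/-- `Γ'_f(x,M)`. -/
def GammaF' (m n : ℕ) (f : Euc n → ℝ) (x : Euc n) (M : ℝ) : Set (MPoly n) :=
  {P ∈ GammaStar' m n x M | peval P x = f x}

/-- `Γ₀⁺`. -/
def Gamma0plus (m n : ℕ) : Set (MPoly n) :=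
  {P | P.totalDegree ≤ m ∧
    (∀ β : Fin n → ℕ, deg β ≤ m → |mD β (peval P) 0| ≤ 1) ∧
    (∀ x : Euc n, 0 ≤ peval P x + ‖x‖ ^ m) ∧
    (∀ ε : ℝ, 0 < ε → ∃ δ : ℝ, 0 < δ ∧ ∀ x : Euc n, ‖x‖ ≤ δ → 0 ≤ peval P x + ε * ‖x‖ ^ m)}

/-- `Γ̃₀'`. -/
def GammaTilde0' (m n : ℕ) : Set (MPoly n) :=
  {P | P.totalDegree ≤ m - 1 ∧
    (∀ β : Fin n → ℕ, deg β ≤ m - 1 → |mD β (peval P) 0| ≤ 1) ∧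
    ∀ x : Euc n, 0 ≤ peval P x + ‖x‖ ^ m}

/-- The closed axis-parallel cube with center `c` and sidelength `δ`. -/
def cube {n : ℕ} (c : Euc n) (δ : ℝ) : Set (Euc n) :=
  {y | ∀ i, |y i - c i| ≤ δ / 2}

/-- `F ∈ C^{m-1,1}(Q)` with `‖F‖_{C^{m-1,1}(Q)} ≤ M`, for the cube `Q` of center `c`,
sidelength `δ`. -/
def CmLipOnCubeLe (m n : ℕ) (c : Euc n) (δ : ℝ) (F : Euc n → ℝ) (M : ℝ) : Prop :=
  ContDiffOn ℝ ((m - 1 : ℕ) : ℕ∞) F (cube c δ) ∧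
  (∀ α : Fin n → ℕ, deg α ≤ m - 1 → ∀ x ∈ cube c δ, |mDW (cube c δ) α F x| ≤ M) ∧
  (∀ α : Fin n → ℕ, deg α = m - 1 → ∀ i : Fin n, ∀ x ∈ cube c δ, ∀ t : ℝ,
    x + t • EuclideanSpace.single i (1 : ℝ) ∈ cube c δ →
    |mDW (cube c δ) α F (x + t • EuclideanSpace.single i (1 : ℝ)) - mDW (cube c δ) α F x|
      ≤ M * |t|)


section Helpers

open Set Filter Topology

/-- Locally `C^{k,1}` functions, by recursion. -/
def QC {n : ℕ} : ℕ → (Euc n → ℝ) → Prop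
  | 0, f => LocallyLipschitz f
  | (k + 1), f => Differentiable ℝ f ∧ ∀ i, QC k (pD i f)

lemma fderiv_eq_sum_pD {n : ℕ} (f : Euc n → ℝ) :
    fderiv ℝ f = fun x => ∑ i, pD i f x • (EuclideanSpace.proj i : Euc n →L[ℝ] ℝ) := by
  funext x
  ext v
  have hv : v = ∑ i, v i • EuclideanSpace.single i (1 : ℝ) := by
    ext j
    simp [Pi.single_apply]
  conv_lhs => rw [hv]
  simp [pD, mul_comm]

lemma contDiff_succ_of_pD {n : ℕ} {k : ℕ} {f : Euc n → ℝ} (hf : Differentiable ℝ f)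
    (h : ∀ i, ContDiff ℝ (k : ℕ∞) (pD i f)) : ContDiff ℝ ((k + 1 : ℕ) : ℕ∞) f := by
  have : (((k + 1 : ℕ) : ℕ∞) : WithTop ℕ∞) = ((k : ℕ∞) : WithTop ℕ∞) + 1 := by norm_cast
  rw [this, contDiff_succ_iff_fderiv]
  refine ⟨hf, by simp, ?_⟩
  rw [fderiv_eq_sum_pD]
  exact ContDiff.sum fun i _ => (h i).smul contDiff_const

lemma QC.contDiff {n : ℕ} : ∀ {k : ℕ} {f : Euc n → ℝ}, QC k f → ContDiff ℝ (k : ℕ∞) f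
  | 0, f, h => by
    have : Continuous f := LocallyLipschitz.continuous h
    simpa using (contDiff_zero (𝕜 := ℝ)).2 this
  | (k + 1), f, h => contDiff_succ_of_pD h.1 fun i => (h.2 i).contDiff

lemma QC.of_succ {n : ℕ} : ∀ {k : ℕ} {f : Euc n → ℝ}, QC (k + 1) f → QC k f
  | 0, f, h => by
    have := h.contDiff
    exact ContDiff.locallyLipschitz (𝕂 := ℝ) (by simpa using this)
  | (k + 1), f, h => ⟨h.1, fun i => (h.2 i).of_succ⟩

lemma QC.mono {n : ℕ} {k j : ℕ} {f : Euc n → ℝ} (h : QC k f) (hj : j ≤ k) : QC j f := by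
  induction hj using Nat.decreasingInduction with
  | self => exact h
  | of_succ _ _ ih => exact ih.of_succ

lemma pD_add {n : ℕ} (i : Fin n) {f g : Euc n → ℝ} (hf : Differentiable ℝ f)
    (hg : Differentiable ℝ g) : pD i (f + g) = pD i f + pD i g := by
  funext x
  simp [pD, fderiv_add (hf x) (hg x)]

lemma pD_mul {n : ℕ} (i : Fin n) {f g : Euc n → ℝ} (hf : Differentiable ℝ f)
    (hg : Differentiable ℝ g) : pD i (f * g) = f * pD i g + g * pD i f := by
  funext x
  simp [pD, fderiv_mul (hf x) (hg x)]

lemma pD_smul {n : ℕ} (i : Fin n) (c : ℝ) {f : Euc n → ℝ} :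
    pD i (c • f) = c • pD i f := by
  funext x
  change fderiv ℝ (c • f) x _ = c • fderiv ℝ f x _
  rw [fderiv_const_smul_field]
  rfl

lemma QC.add {n : ℕ} : ∀ {k : ℕ} {f g : Euc n → ℝ}, QC k f → QC k g → QC k (f + g)
  | 0, f, g, hf, hg => LocallyLipschitz.add (f := f) (g := g) hf hg
  | (k + 1), f, g, hf, hg => ⟨hf.1.add hg.1, fun i => by
      rw [pD_add i hf.1 hg.1]; exact (hf.2 i).add (hg.2 i)⟩

lemma QC.mul {n : ℕ} : ∀ {k : ℕ} {f g : Euc n → ℝ}, QC k f → QC k g → QC k (f * g)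
  | 0, f, g, hf, hg => by
    have h1 : LocallyLipschitz (fun p : ℝ × ℝ => p.1 * p.2) :=
      ContDiff.locallyLipschitz (𝕂 := ℝ) (contDiff_fst.mul contDiff_snd)
    exact h1.comp (LocallyLipschitz.prodMk hf hg)
  | (k + 1), f, g, hf, hg => ⟨hf.1.mul hg.1, fun i => by
      rw [pD_mul i hf.1 hg.1]; exact (hf.of_succ.mul (hg.2 i)).add (hg.of_succ.mul (hf.2 i))⟩

lemma QC.of_contDiff {n : ℕ} : ∀ {k : ℕ} {f : Euc n → ℝ}, ContDiff ℝ ((⊤ : ℕ∞) : WithTop ℕ∞) f → QC k f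
  | 0, f, hf => ContDiff.locallyLipschitz (𝕂 := ℝ) (hf.of_le (by exact_mod_cast le_top))
  | (k + 1), f, hf => ⟨hf.differentiable (by simp), fun i =>
      QC.of_contDiff ((contDiff_infty_iff_fderiv.1 hf).2.clm_apply contDiff_const)⟩

lemma QC.zero {n : ℕ} (k : ℕ) : QC k (0 : Euc n → ℝ) :=
  QC.of_contDiff (f := fun _ => (0 : ℝ)) contDiff_const

lemma QC.smul {n : ℕ} {k : ℕ} {f : Euc n → ℝ} (c : ℝ) (hf : QC k f) : QC k (c • f) :=
  (QC.of_contDiff (f := fun _ => c) contDiff_const).mul hf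

lemma QC.sum {n : ℕ} {ι : Type*} (s : Finset ι) {k : ℕ} {f : ι → Euc n → ℝ}
    (hf : ∀ i ∈ s, QC k (f i)) : QC k (∑ i ∈ s, f i) := by
  classical
  induction s using Finset.induction_on with
  | empty => exact QC.zero k
  | insert a s ha ih =>
    rw [Finset.sum_insert ha]
    exact (hf a (by simp)).add (ih fun i hi => hf i (by simp [hi]))

/-- Iterated partial derivatives along a list. -/
def lD {n : ℕ} (l : List (Fin n)) (f : Euc n → ℝ) : Euc n → ℝ := l.foldr pD f

lemma QC.lD {n : ℕ} {f : Euc n → ℝ} : ∀ (l : List (Fin n)) {k : ℕ}, QC (k + l.length) f → QC k (lD l f)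
  | [], k, h => h
  | (i :: l), k, h => by
    have : QC (k + 1) (_root_.lD l f) := QC.lD l (by
      convert h using 1; simp; omega)
    exact this.2 i

lemma lD_add {n : ℕ} {f g : Euc n → ℝ} : ∀ (l : List (Fin n)), QC l.length f → QC l.length g →
    lD l (f + g) = lD l f + lD l g
  | [], _, _ => rfl
  | (i :: l), hf, hg => by
    have e := lD_add l (hf.mono (by simp)) (hg.mono (by simp))
    have hf' : QC 1 (lD l f) := QC.lD l (by convert hf using 1; simp; omega)
    have hg' : QC 1 (lD l g) := QC.lD l (by convert hg using 1; simp; omega)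
    change pD i (lD l (f + g)) = pD i (lD l f) + pD i (lD l g)
    rw [e, pD_add i hf'.1 hg'.1]

lemma lD_smul {n : ℕ} {f : Euc n → ℝ} (c : ℝ) : ∀ (l : List (Fin n)),
    lD l (c • f) = c • lD l f
  | [] => rfl
  | (i :: l) => by
    change pD i (lD l (c • f)) = c • pD i (lD l f)
    rw [lD_smul c l, pD_smul]

lemma lD_zero {n : ℕ} (l : List (Fin n)) : lD l (0 : Euc n → ℝ) = 0 := by
  have := lD_smul (f := (0 : Euc n → ℝ)) 0 l
  simpa using this

lemma lD_sum {n : ℕ} {ι : Type*} (s : Finset ι) (l : List (Fin n)) {f : ι → Euc n → ℝ}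
    (hf : ∀ i ∈ s, QC l.length (f i)) : lD l (∑ i ∈ s, f i) = ∑ i ∈ s, lD l (f i) := by
  classical
  induction s using Finset.induction_on with
  | empty => simp [lD_zero]
  | insert a s ha ih =>
    have h2 : ∀ i ∈ s, QC l.length (f i) := fun i hi => hf i (by simp [hi])
    rw [Finset.sum_insert ha, Finset.sum_insert ha, lD_add l (hf a (by simp)) (QC.sum s h2), ih h2]

lemma lD_congr {n : ℕ} {f g : Euc n → ℝ} {x : Euc n} (h : f =ᶠ[𝓝 x] g) :
    ∀ l : List (Fin n), lD l f =ᶠ[𝓝 x] lD l g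
  | [] => h
  | (i :: l) => by
    have := (lD_congr h l).fderiv (𝕜 := ℝ)
    filter_upwards [this] with y hy
    change pD i (lD l f) y = pD i (lD l g) y
    simp [pD, hy]

lemma lD_compact {n : ℕ} {f : Euc n → ℝ} (h : HasCompactSupport f) :
    ∀ l : List (Fin n), HasCompactSupport (lD l f)
  | [] => h
  | (i :: l) => (lD_compact h l).fderiv_apply (𝕜 := ℝ) _

/-- Quantitative `C^{k,1}`. -/
def CL {n : ℕ} (k : ℕ) (f : Euc n → ℝ) (M : ℝ) : Prop :=
  QC k f ∧ ∀ l : List (Fin n), l.length ≤ k → (∀ x, |lD l f x| ≤ M) ∧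
    (l.length = k → ∀ x y, |lD l f x - lD l f y| ≤ M * ‖x - y‖)

lemma CL.nonneg {n k : ℕ} {f : Euc n → ℝ} {M : ℝ} (h : CL k f M) : 0 ≤ M :=
  (abs_nonneg _).trans ((h.2 [] (by simp)).1 0)

lemma CL.add {n k : ℕ} {f g : Euc n → ℝ} {M N : ℝ} (hf : CL k f M) (hg : CL k g N) :
    CL k (f + g) (M + N) := by
  refine ⟨hf.1.add hg.1, fun l hl => ?_⟩
  rw [lD_add l (hf.1.mono hl) (hg.1.mono hl)]
  refine ⟨fun x => ?_, fun hk x y => ?_⟩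
  · exact (abs_add_le _ _).trans (add_le_add ((hf.2 l hl).1 x) ((hg.2 l hl).1 x))
  · have h1 := (hf.2 l hl).2 hk x y
    have h2 := (hg.2 l hl).2 hk x y
    have : (lD l f + lD l g) x - (lD l f + lD l g) y
      = (lD l f x - lD l f y) + (lD l g x - lD l g y) := by simp; ring
    rw [this, add_mul]
    exact (abs_add_le _ _).trans (add_le_add h1 h2)

lemma CL.smul {n k : ℕ} {f : Euc n → ℝ} {M : ℝ} {c : ℝ} (hc : |c| ≤ 1) (hf : CL k f M) :
    CL k (c • f) M := by
  refine ⟨hf.1.smul c, fun l hl => ?_⟩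
  rw [lD_smul]
  refine ⟨fun x => ?_, fun hk x y => ?_⟩
  · have h1 := (hf.2 l hl).1 x
    simp only [Pi.smul_apply, smul_eq_mul, abs_mul]
    nlinarith [abs_nonneg (lD l f x), abs_nonneg c]
  · have h1 := (hf.2 l hl).2 hk x y
    simp only [Pi.smul_apply, smul_eq_mul, ← mul_sub, abs_mul]
    nlinarith [abs_nonneg (lD l f x - lD l f y), abs_nonneg c]

lemma CL.sum {n k : ℕ} {ι : Type*} (s : Finset ι) {f : ι → Euc n → ℝ} {M : ι → ℝ}
    (hf : ∀ i ∈ s, CL k (f i) (M i)) : CL k (∑ i ∈ s, f i) (∑ i ∈ s, M i) := by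
  classical
  induction s using Finset.induction_on with
  | empty =>
    refine ⟨QC.zero k, fun l hl => ?_⟩
    simp [lD_zero]
  | insert a s ha ih =>
    rw [Finset.sum_insert ha, Finset.sum_insert ha]
    exact (hf a (by simp)).add (ih fun i hi => hf i (by simp [hi]))

lemma lipschitz_of_compact {n : ℕ} {f : Euc n → ℝ} (hf : LocallyLipschitz f)
    (hc : HasCompactSupport f) : ∃ M : ℝ, 0 ≤ M ∧ ∀ x y, |f x - f y| ≤ M * ‖x - y‖ := by
  obtain ⟨B, hB⟩ := hc.exists_bound_of_continuous hf.continuous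
  obtain ⟨R, hR⟩ := hc.isCompact.isBounded.subset_closedBall (0 : Euc n)
  have hz : ∀ x, R < ‖x‖ → f x = 0 := fun x hx => by
    by_contra h
    have := hR (subset_tsupport f h)
    simp at this
    linarith
  obtain ⟨K, hK⟩ := (hf.locallyLipschitzOn
    (s := Metric.closedBall (0 : Euc n) (R + 1))).exists_lipschitzOnWith_of_compact
    (isCompact_closedBall _ _)
  have hB0 : 0 ≤ B := (norm_nonneg _).trans (hB 0)
  have key : ∀ x y, ‖x‖ ≤ R → |f x - f y| ≤ (K + B) * ‖x - y‖ := by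
    intro x y hx
    by_cases hy : ‖y‖ ≤ R + 1
    · have := hK.dist_le_mul x (by simp; linarith) y (by simpa using hy)
      rw [Real.dist_eq, dist_eq_norm] at this
      nlinarith [norm_nonneg (x - y)]
    · push Not at hy
      have h1 : 1 ≤ ‖x - y‖ := by
        have := norm_sub_norm_le y x
        rw [norm_sub_rev] at this
        linarith
      rw [hz y (by linarith), sub_zero]
      have := hB x
      rw [Real.norm_eq_abs] at this
      have hK0 : (0 : ℝ) ≤ K := K.2
      nlinarith
  refine ⟨K + B, add_nonneg K.2 hB0, fun x y => ?_⟩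
  by_cases hx : ‖x‖ ≤ R
  · exact key x y hx
  · by_cases hy : ‖y‖ ≤ R
    · rw [abs_sub_comm, norm_sub_rev]
      exact key y x hy
    · push Not at hx hy
      rw [hz x hx, hz y hy]
      simp
      exact mul_nonneg (add_nonneg K.2 hB0) (norm_nonneg _)

lemma CL.exists_of_compact {n k : ℕ} {f : Euc n → ℝ} (hf : QC k f) (hc : HasCompactSupport f) :
    ∃ M, CL k f M := by
  have h1 : ∀ l : List (Fin n), ∃ M : ℝ, 0 ≤ M ∧ (l.length ≤ k → (∀ x, |lD l f x| ≤ M) ∧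
    (l.length = k → ∀ x y, |lD l f x - lD l f y| ≤ M * ‖x - y‖)) := by
    intro l
    by_cases hl : l.length ≤ k
    · have hQ : QC 0 (lD l f) := QC.lD l (hf.mono (by omega))
      obtain ⟨M, hM, h⟩ := lipschitz_of_compact hQ (lD_compact hc l)
      obtain ⟨B, hB⟩ := (lD_compact hc l).exists_bound_of_continuous
        (LocallyLipschitz.continuous hQ)
      have hB0 : 0 ≤ B := (norm_nonneg _).trans (hB 0)
      refine ⟨M + B, by positivity, fun _ => ⟨fun x => ?_, fun _ x y => ?_⟩⟩
      · have := hB x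
        rw [Real.norm_eq_abs] at this
        linarith
      · have := h x y
        nlinarith [norm_nonneg (x - y)]
    · exact ⟨0, le_rfl, fun h => absurd h hl⟩
  choose M hM0 hM using h1
  have hfin := List.finite_length_le (Fin n) k
  refine ⟨∑ l ∈ hfin.toFinset, M l, hf, fun l hl => ?_⟩
  have hle : M l ≤ ∑ l ∈ hfin.toFinset, M l :=
    Finset.single_le_sum (fun i _ => hM0 i) (by simpa using hl)
  refine ⟨fun x => ((hM l hl).1 x).trans hle, fun hk x y => ((hM l hl).2 hk x y).trans ?_⟩
  exact mul_le_mul_of_nonneg_right hle (norm_nonneg _)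

/-- The list attached to a multi-index. -/
def aL {n : ℕ} (α : Fin n → ℕ) : List (Fin n) :=
  (List.finRange n).flatMap fun i => List.replicate (α i) i

lemma mD_eq {n : ℕ} (α : Fin n → ℕ) (f : Euc n → ℝ) : mD α f = lD (aL α) f := rfl

lemma aL_length {n : ℕ} (α : Fin n → ℕ) : (aL α).length = deg α := by
  simp [aL, deg, List.length_flatMap, List.sum_ofFn, ← List.ofFn_eq_map]

lemma CL.cmLip {n k : ℕ} {f : Euc n → ℝ} {M : ℝ} (h : CL k f M) : CmLipNormLe (k + 1) n f M := by
  refine ⟨by simpa using h.1.contDiff, fun α hα x => ?_, fun α hα i x t => ?_⟩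
  · rw [mD_eq]
    exact (h.2 _ (by rw [aL_length]; simpa using hα)).1 x
  · rw [mD_eq]
    have hl : (aL α).length = k := by rw [aL_length]; simpa using hα
    have := (h.2 _ hl.le).2 hl (x + t • EuclideanSpace.single i (1 : ℝ)) x
    simpa [norm_smul] using this

lemma contDiff_peval {n : ℕ} (P : MPoly n) :
    ContDiff ℝ ((⊤ : ℕ∞) : WithTop ℕ∞) (peval P) := by
  unfold peval
  induction P using MvPolynomial.induction_on with
  | C a => simpa using contDiff_const
  | add p q hp hq => simpa using hp.add hq
  | mul_X p i hp =>
    simp only [map_mul, MvPolynomial.eval_X]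
    exact hp.mul (EuclideanSpace.proj i : Euc n →L[ℝ] ℝ).contDiff

lemma pD_peval {n : ℕ} (i : Fin n) (P : MPoly n) :
    pD i (peval P) = peval (MvPolynomial.pderiv i P) := by
  have hd : ∀ P : MPoly n, Differentiable ℝ (peval P) :=
    fun P => (contDiff_peval P).differentiable (by simp)
  induction P using MvPolynomial.induction_on with
  | C a =>
    have : peval (MvPolynomial.C a : MPoly n) = fun _ => a := by funext x; simp [peval]
    rw [this]
    funext x
    simp [pD, peval]
  | add p q hp hq =>
    have : peval (p + q) = peval p + peval q := by funext x; simp [peval]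
    rw [this, pD_add i (hd p) (hd q), hp, hq]
    funext x; simp [peval]
  | mul_X p j hp =>
    have : peval (p * MvPolynomial.X j) = peval p * peval (MvPolynomial.X j) := by
      funext x; simp [peval]
    rw [this, pD_mul i (hd p) (hd _), hp]
    have hX : pD i (peval (MvPolynomial.X j)) = fun _ => if i = j then (1 : ℝ) else 0 := by
      have : peval (MvPolynomial.X j) = (EuclideanSpace.proj j : Euc n →L[ℝ] ℝ) := by
        funext x; simp [peval]
      funext x
      rw [this, pD, ContinuousLinearMap.fderiv]
      simp [Pi.single_apply, eq_comm]
    rw [hX]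
    funext x
    by_cases h : i = j
    · subst h; simp [peval]
    · simp [peval, h, Pi.single_apply, Ne.symm h]

lemma lD_peval {n : ℕ} (P : MPoly n) : ∀ l : List (Fin n),
    lD l (peval P) = peval (l.foldr (fun i Q => MvPolynomial.pderiv i Q) P)
  | [] => rfl
  | (i :: l) => by
    change pD i (lD l (peval P)) = _
    rw [lD_peval P l, pD_peval]; rfl

lemma coeff_foldr {n : ℕ} (P : MPoly n) : ∀ (l : List (Fin n)) (s : Fin n →₀ ℕ),
    |P.coeff (s + (l.map fun i => Finsupp.single i 1).sum)| ≤
      |(l.foldr (fun i Q => MvPolynomial.pderiv i Q) P).coeff s|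
  | [], s => by simp
  | (i :: l), s => by
    have h := coeff_foldr P l (s + Finsupp.single i 1)
    simp only [List.foldr_cons, MvPolynomial.coeff_pderiv, List.map_cons, List.sum_cons, abs_mul]
    rw [← add_assoc]
    refine h.trans (le_mul_of_one_le_right (abs_nonneg _) ?_)
    rw [abs_of_nonneg (by positivity)]
    have : (0 : ℝ) ≤ s i := by positivity
    linarith

lemma aL_sum {n : ℕ} (s : Fin n →₀ ℕ) :
    ((aL s).map fun i => Finsupp.single i 1).sum = s := by
  have : ∀ L : List (Fin n), (((L.flatMap fun i => List.replicate (s i) i)).map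
      fun i => (Finsupp.single i 1 : Fin n →₀ ℕ)).sum
      = (L.map fun i => Finsupp.single i (s i)).sum := by
    intro L
    induction L with
    | nil => simp
    | cons a L ih => simp [ih]
  rw [aL, this, ← List.ofFn_eq_map, List.sum_ofFn]
  exact Finsupp.univ_sum_single s

lemma coeff_le {n : ℕ} (P : MPoly n) (s : Fin n →₀ ℕ) :
    |P.coeff s| ≤ |mD s (peval P) 0| := by
  have := coeff_foldr P (aL s) 0
  rw [aL_sum, zero_add] at this
  rw [mD_eq, lD_peval]
  refine this.trans (le_of_eq ?_)
  simp only [peval]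
  congr 1
  rw [← MvPolynomial.constantCoeff_eq]
  simp [MvPolynomial.eval_zero']

/-- Properties of the profile function: `u = id` or `u = |·|`. -/
structure Prof (u : ℝ → ℝ) : Prop where
  zero : u 0 = 0
  lip : LocallyLipschitz u
  der : ∀ (k : ℕ) (t : ℝ), HasDerivAt (fun t => t ^ (k + 1) * u t) ((k + 2) * (t ^ k * u t)) t

lemma prof_id : Prof (fun t => t) where
  zero := rfl
  lip := LocallyLipschitz.id
  der k t := by
    have := hasDerivAt_pow (k + 2) t
    refine (this.congr_of_eventuallyEq ?_).congr_deriv ?_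
    · filter_upwards with s
      ring
    · rw [show k + 2 - 1 = k + 1 by omega]
      push_cast
      ring

lemma prof_abs : Prof (fun t => |t|) where
  zero := abs_zero
  lip := lipschitzWith_one_norm.locallyLipschitz
  der k t := by
    rcases lt_trichotomy t 0 with h | h | h
    · have := (hasDerivAt_pow (k + 2) t).neg
      rw [abs_of_neg h]
      refine (this.congr_of_eventuallyEq ?_).congr_deriv ?_
      · filter_upwards [Iio_mem_nhds h] with s hs
        rw [abs_of_neg hs]
        simp
        ring
      · rw [show k + 2 - 1 = k + 1 by omega]
        push_cast
        ring
    · subst h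
      rw [hasDerivAt_iff_tendsto_slope_zero]
      have h0 : Tendsto (fun t : ℝ => t ^ k * |t|) (𝓝[≠] 0) (𝓝 (0 ^ k * |0|)) :=
        ((by fun_prop : Continuous fun t : ℝ => t ^ k * |t|).tendsto 0).mono_left nhdsWithin_le_nhds
      simp only [abs_zero, mul_zero] at h0 ⊢
      refine h0.congr' ?_
      filter_upwards [self_mem_nhdsWithin] with t ht
      have ht' : t ≠ 0 := ht
      simp
      field_simp
      ring
    · have := (hasDerivAt_pow (k + 2) t)
      rw [abs_of_pos h]
      refine (this.congr_of_eventuallyEq ?_).congr_deriv ?_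
      · filter_upwards [Ioi_mem_nhds h] with s hs
        rw [abs_of_pos hs]
        ring
      · rw [show k + 2 - 1 = k + 1 by omega]
        push_cast
        ring

/-- `x ↦ x_i^k u(x_i)`. -/
def gK {n : ℕ} (u : ℝ → ℝ) (k : ℕ) (i : Fin n) : Euc n → ℝ := fun x => x i ^ k * u (x i)

lemma gK_hasFDerivAt {n : ℕ} {u : ℝ → ℝ} (hu : Prof u) (k : ℕ) (i : Fin n) (x : Euc n) :
    HasFDerivAt (gK u (k + 1) i)
      ((((k : ℝ) + 2) * (x i ^ k * u (x i))) • (EuclideanSpace.proj i : Euc n →L[ℝ] ℝ)) x :=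
  HasDerivAt.comp_hasFDerivAt (h₂ := fun t => t ^ (k + 1) * u t) x (hu.der k (x i))
    (EuclideanSpace.proj i : Euc n →L[ℝ] ℝ).hasFDerivAt

lemma pD_gK {n : ℕ} {u : ℝ → ℝ} (hu : Prof u) (k : ℕ) (i j : Fin n) :
    ∃ c : ℝ, pD j (gK u (k + 1) i) = c • gK u k i := by
  refine ⟨((k : ℝ) + 2) * (if i = j then 1 else 0), ?_⟩
  funext x
  rw [pD, (gK_hasFDerivAt hu k i x).fderiv]
  simp [gK, Pi.single_apply]

lemma gK_QC {n : ℕ} {u : ℝ → ℝ} (hu : Prof u) (i : Fin n) : ∀ k, QC k (gK u k i)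
  | 0 => by
    have := hu.lip.comp (EuclideanSpace.proj i : Euc n →L[ℝ] ℝ).lipschitz.locallyLipschitz
    have e : gK u 0 i = u ∘ (EuclideanSpace.proj i : Euc n →L[ℝ] ℝ) := by
      funext x; simp [gK]
    rw [e]
    exact this
  | (k + 1) => by
    refine ⟨fun x => (gK_hasFDerivAt hu k i x).differentiableAt, fun j => ?_⟩
    obtain ⟨c, hc⟩ := pD_gK hu k i j
    rw [hc]
    exact (gK_QC hu i k).smul c

lemma lD_gK {n : ℕ} {u : ℝ → ℝ} (hu : Prof u) (i : Fin n) : ∀ (l : List (Fin n)) (k : ℕ),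
    ∃ c : ℝ, lD l (gK u (k + l.length) i) = c • gK u k i
  | [], k => ⟨1, by simp [lD]⟩
  | (j :: l), k => by
    obtain ⟨c, hc⟩ := lD_gK hu i l (k + 1)
    obtain ⟨d, hd⟩ := pD_gK hu k i j
    refine ⟨c * d, ?_⟩
    change pD j (lD l (gK u (k + (l.length + 1)) i)) = _
    rw [show k + (l.length + 1) = k + 1 + l.length by omega, hc, pD_smul, hd, smul_smul]

lemma lD_gK_zero {n : ℕ} {u : ℝ → ℝ} (hu : Prof u) (i : Fin n) (l : List (Fin n)) (k : ℕ)
    (hl : l.length ≤ k) : lD l (gK u k i) 0 = 0 := by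
  obtain ⟨c, hc⟩ := lD_gK hu i l (k - l.length)
  rw [Nat.sub_add_cancel hl] at hc
  rw [hc]
  simp [gK, hu.zero]

lemma exists_prof (k : ℕ) : ∃ u, Prof u ∧ ∀ t : ℝ, t ^ k * u t = |t| ^ (k + 1) := by
  rcases Nat.even_or_odd k with h | h
  · refine ⟨_, prof_abs, fun t => ?_⟩
    rw [pow_succ, h.pow_abs]
  · refine ⟨_, prof_id, fun t => ?_⟩
    rw [h.add_one.pow_abs, pow_succ]

lemma euc_norm_pow_le {n : ℕ} (x : Euc n) (k : ℕ) (hn : 0 < n) :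
    ‖x‖ ^ (k + 1) ≤ (n : ℝ) ^ (k + 1) * ∑ i, |x i| ^ (k + 1) := by
  haveI : Nonempty (Fin n) := ⟨⟨0, hn⟩⟩
  obtain ⟨j, -, hj⟩ := Finset.exists_max_image Finset.univ (fun i => |x i|)
    Finset.univ_nonempty
  have h1 : ‖x‖ ≤ n * |x j| := by
    have hv : x = ∑ i, x i • EuclideanSpace.single i (1 : ℝ) := by
      ext j
      simp [Pi.single_apply]
    have : ‖x‖ ≤ ∑ i, |x i| := by
      conv_lhs => rw [hv]
      refine (norm_sum_le _ _).trans (le_of_eq ?_)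
      simp [norm_smul]
    refine this.trans ((Finset.sum_le_sum fun i hi => hj i hi).trans ?_)
    simp
  calc ‖x‖ ^ (k + 1) ≤ (n * |x j|) ^ (k + 1) := by gcongr
    _ = (n : ℝ) ^ (k + 1) * |x j| ^ (k + 1) := mul_pow _ _ _
    _ ≤ _ := by
      gcongr
      exact Finset.single_le_sum (f := fun i => |x i| ^ (k + 1)) (fun i _ => by positivity)
        (Finset.mem_univ j)

end Helpers

/-- Second inclusion in (4.2): `Γ̃₀' ⊆ Γ'*(0,C)`. -/
theorem GammaTilde0'_subset_GammaStar' (m n : ℕ) (hm : 0 < m) (hn : 0 < n) :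
    ∃ C : ℝ, 0 < C ∧ GammaTilde0' m n ⊆ GammaStar' m n 0 C := by
  obtain ⟨k, rfl⟩ : ∃ k, m = k + 1 := ⟨m - 1, by omega⟩
  obtain ⟨u, hu, huk⟩ := exists_prof k
  let θ : ContDiffBump (0 : Euc n) := ⟨1, 2, by norm_num, by norm_num⟩
  have hθQ : QC k (θ : Euc n → ℝ) := QC.of_contDiff θ.contDiff
  have hθc : HasCompactSupport (θ : Euc n → ℝ) := θ.hasCompactSupport
  set G : Euc n → ℝ := ((n : ℝ) ^ (k + 1)) • ∑ i, gK u k i with hG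
  have hGQ : QC k G := (QC.sum _ fun i _ => gK_QC hu i k).smul _
  obtain ⟨M₀, hM₀⟩ := CL.exists_of_compact (hθQ.mul hGQ) (hθc.mul_right)
  have hmono : ∀ s : Fin n →₀ ℕ, QC k (peval (MvPolynomial.monomial s (1 : ℝ))) :=
    fun s => QC.of_contDiff (contDiff_peval _)
  have h1 : ∀ s : Fin n →₀ ℕ, ∃ M, CL k ((θ : Euc n → ℝ) * peval (MvPolynomial.monomial s (1 : ℝ))) M :=
    fun s => CL.exists_of_compact (hθQ.mul (hmono s)) hθc.mul_right
  choose M hM using h1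
  have hfin := Finsupp.finite_of_degree_le (σ := Fin n) k
  set S := hfin.toFinset
  have hM₀0 := hM₀.nonneg
  have hS0 : 0 ≤ ∑ s ∈ S, M s := Finset.sum_nonneg fun s _ => (hM s).nonneg
  refine ⟨∑ s ∈ S, M s + (M₀ + 1), by linarith, ?_⟩
  rintro P ⟨hdeg, hjet, hpos⟩
  simp only [Nat.add_sub_cancel] at hdeg hjet
  have hsub : P.support ⊆ S := fun s hs => by
    have := (MvPolynomial.le_totalDegree hs).trans hdeg
    simpa [S, Finsupp.degree_eq_sum, Finsupp.sum_fintype] using this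
  have hP : peval P = ∑ s ∈ S, P.coeff s • peval (MvPolynomial.monomial s (1 : ℝ)) := by
    funext x
    have : P = ∑ s ∈ S, MvPolynomial.monomial s (P.coeff s) := by
      conv_lhs => rw [P.as_sum]
      refine Finset.sum_subset hsub fun s _ hs => ?_
      rw [MvPolynomial.notMem_support_iff.1 hs, MvPolynomial.monomial_zero]
    conv_lhs => rw [this]
    simp [peval, MvPolynomial.eval_monomial]
  have hPQ : QC k (peval P) := QC.of_contDiff (contDiff_peval _)
  have hθP : CL k ((θ : Euc n → ℝ) * peval P) (∑ s ∈ S, M s) := by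
    have : (θ : Euc n → ℝ) * peval P
        = ∑ s ∈ S, P.coeff s • ((θ : Euc n → ℝ) * peval (MvPolynomial.monomial s (1 : ℝ))) := by
      rw [hP, Finset.mul_sum]
      simp
    rw [this]
    refine CL.sum S fun s hs => (hM s).smul ((coeff_le P s).trans (hjet s ?_))
    simpa [S, Finsupp.degree_eq_sum, deg] using hs
  have hF : CL k ((θ : Euc n → ℝ) * peval P + (θ : Euc n → ℝ) * G) (∑ s ∈ S, M s + (M₀ + 1)) := by
    have := hθP.add hM₀
    have h0 : CL k (0 : Euc n → ℝ) 1 := by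
      refine ⟨QC.zero k, fun l hl => ?_⟩
      simp [lD_zero]
    simpa [add_assoc] using this.add h0
  refine ⟨_, hF.cmLip, fun y => ?_, by simpa using hdeg, fun α hα => ?_⟩
  · have h2 : ‖y‖ ^ (k + 1) ≤ G y := by
      refine (euc_norm_pow_le y k hn).trans (le_of_eq ?_)
      simp [hG, gK, huk]
    have h3 : (0 : ℝ) ≤ θ y := θ.nonneg
    have h4 := hpos y
    simp only [Pi.add_apply, Pi.mul_apply, ← mul_add]
    exact mul_nonneg h3 (by linarith)
  · have hl : (aL α).length ≤ k := by rw [aL_length]; simpa using hα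
    rw [mD_eq, mD_eq]
    have hev : ((θ : Euc n → ℝ) * peval P + (θ : Euc n → ℝ) * G) =ᶠ[nhds 0] (peval P + G) := by
      filter_upwards [θ.eventuallyEq_one] with y hy
      simp [hy]
    rw [(lD_congr hev (aL α)).eq_of_nhds, lD_add _ (hPQ.mono hl) (hGQ.mono hl), hG, lD_smul,
      lD_sum _ _ fun i _ => (gK_QC hu i k).mono hl]
    simp [lD_gK_zero hu _ _ _ hl]

end
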